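/- Let B be a C*-algebra and b ∈ B₊, ε > 0. Suppose b and (b − ε)₊ are properly infinite positive elements generating the same closed two-sided ideal I of B. Then I contains a projection p that is properly infinite and full in I (i.e., generates I as an ideal). -/

import Mathlib

open Filter Topology

/-- A subset of a C*-algebra is a closed two-sided ideal. -/
def IsClosedTwoSidedIdeal {B : Type*} [NonUnitalCStarAlgebra B] (S : Set B) : Prop :=
  IsClosed S ∧ (0 : B) ∈ S ∧ (∀ x ∈ S, ∀ y ∈ S, x + y ∈ S) ∧ (∀ x ∈ S, -x ∈ S) ∧
    (∀ a : B, ∀ x ∈ S, a * x ∈ S ∧ x * a ∈ S)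

/-- The smallest closed two-sided ideal of `B` containing `a`. -/
def closedIdealGen {B : Type*} [NonUnitalCStarAlgebra B] (a : B) : Set B :=
  ⋂₀ {S : Set B | IsClosedTwoSidedIdeal S ∧ a ∈ S}

/-- Cuntz subequivalence in `M₂(B)`: `x ≾ y` iff there exist `w_n` with `w_n* y w_n → x`. -/
def CuntzLE₂ {B : Type*} [NonUnitalCStarAlgebra B]
    (x y : Matrix (Fin 2) (Fin 2) B) : Prop :=
  ∃ w : ℕ → Matrix (Fin 2) (Fin 2) B,
    Tendsto (fun n => star (w n) * y * w n) atTop (𝓝 x)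

/-- A non-zero positive element `a` is properly infinite if `a ⊕ a ≾ a ⊕ 0` in `M₂(B)`. -/
def ProperlyInfinite {B : Type*} [NonUnitalCStarAlgebra B] [PartialOrder B]
    [StarOrderedRing B] (a : B) : Prop :=
  a ≠ 0 ∧ 0 ≤ a ∧ CuntzLE₂ (Matrix.diagonal ![a, a]) (Matrix.diagonal ![a, 0])

/-!
Write `c = (b - ε)₊`. Since `b` lies in the ideal `I` generated by `c`, a function of `b` in `I`
is a left unit for `c`, and functional calculus yields further local units in `I`. Proper
infiniteness of `c` gives, for a large local unit `q` and a small one `u`, almost orthogonal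
exact copies `S`, `T` of `q²` whose ranges lie below `u`. For local units `u ≤ s ≤ q` and
`f = √(1 - (1 - s)²)`, the element `1 + v = S f + (1 - s)` is an isometry of the unitization with
`v ∈ I`. Its range nearly misses `T`, so the defect projection `p = 1 - (1 + v)(1 + v)*`, which
lies in `I`, contains an exact copy of `u`. Hence `p` is full, and almost orthogonal copies of
`p` below `u` can be moved below `p`, so that `p` is properly infinite.
-/

section ClosedIdeal

variable {B : Type*} [NonUnitalCStarAlgebra B]

namespace IsClosedTwoSidedIdeal

variable {I : Set B} {x y : B}

theorem add_mem (hI : IsClosedTwoSidedIdeal I) (hx : x ∈ I) (hy : y ∈ I) : x + y ∈ I :=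
  hI.2.2.1 x hx y hy

theorem neg_mem (hI : IsClosedTwoSidedIdeal I) (hx : x ∈ I) : -x ∈ I :=
  hI.2.2.2.1 x hx

theorem sub_mem (hI : IsClosedTwoSidedIdeal I) (hx : x ∈ I) (hy : y ∈ I) : x - y ∈ I :=
  sub_eq_add_neg x y ▸ hI.add_mem hx (hI.neg_mem hy)

theorem mul_mem_left (hI : IsClosedTwoSidedIdeal I) (a : B) (hx : x ∈ I) : a * x ∈ I :=
  (hI.2.2.2.2 a x hx).1

theorem mul_mem_right (hI : IsClosedTwoSidedIdeal I) (a : B) (hx : x ∈ I) : x * a ∈ I :=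
  (hI.2.2.2.2 a x hx).2

theorem star_preimage (hI : IsClosedTwoSidedIdeal I) :
    IsClosedTwoSidedIdeal (star ⁻¹' I) := by
  refine ⟨hI.1.preimage continuous_star, ?_, fun x hx y hy => ?_, fun x hx => ?_,
    fun a x hx => ⟨?_, ?_⟩⟩
  · simpa only [Set.mem_preimage, star_zero] using hI.2.1
  · simpa only [Set.mem_preimage, star_add] using hI.add_mem hx hy
  · simpa only [Set.mem_preimage, star_neg] using hI.neg_mem hx
  · simpa only [Set.mem_preimage, star_mul] using hI.mul_mem_right _ hx
  · simpa only [Set.mem_preimage, star_mul] using hI.mul_mem_left _ hx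

end IsClosedTwoSidedIdeal

theorem isClosedTwoSidedIdeal_closedIdealGen (a : B) :
    IsClosedTwoSidedIdeal (closedIdealGen a) :=
  ⟨isClosed_sInter fun _ hS => hS.1.1, fun _ hS => hS.1.2.1,
    fun _ hx _ hy S hS => hS.1.add_mem (hx S hS) (hy S hS),
    fun _ hx S hS => hS.1.neg_mem (hx S hS),
    fun b _ hx => ⟨fun S hS => hS.1.mul_mem_left b (hx S hS),
      fun S hS => hS.1.mul_mem_right b (hx S hS)⟩⟩

theorem mem_closedIdealGen_self (a : B) : a ∈ closedIdealGen a :=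
  fun _ hS => hS.2

theorem closedIdealGen_subset {a : B} {I : Set B} (hI : IsClosedTwoSidedIdeal I) (ha : a ∈ I) :
    closedIdealGen a ⊆ I :=
  Set.sInter_subset_of_mem ⟨hI, ha⟩

theorem closedIdealGen_subset_closedIdealGen {a b : B} (ha : a ∈ closedIdealGen b) :
    closedIdealGen a ⊆ closedIdealGen b :=
  closedIdealGen_subset (isClosedTwoSidedIdeal_closedIdealGen b) ha

theorem star_mem_closedIdealGen {a x : B} (ha : IsSelfAdjoint a)
    (hx : x ∈ closedIdealGen a) : star x ∈ closedIdealGen a := by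
  have hstar_a : a ∈ star ⁻¹' closedIdealGen a := by
    simpa only [Set.mem_preimage, ha.star_eq] using mem_closedIdealGen_self a
  exact closedIdealGen_subset (isClosedTwoSidedIdeal_closedIdealGen a).star_preimage hstar_a hx

end ClosedIdeal

section IsometryDefect

variable {R : Type*} [NonUnitalRing R] [StarRing R]

/-- The element `1 - (1 + v)(1 + v)*` of the unitization, which lies in `R` itself. It is the
defect projection of `1 + v` when the latter is an isometry, i.e. when `v + v* + v* v = 0`. -/
def isometryDefect (v : R) : R :=
  -(v + star v + v * star v)

theorem isStarProjection_isometryDefect {v : R} (hv : v + star v + star v * v = 0) :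
    IsStarProjection (isometryDefect v) := by
  have hmul : isometryDefect v * v = -isometryDefect v := by
    calc isometryDefect v * v = v + star v + v * star v - (v + star v + star v * v)
          - v * (v + star v + star v * v) := by unfold isometryDefect; noncomm_ring
      _ = -isometryDefect v := by rw [hv, isometryDefect]; simp
  refine ⟨?_, ?_⟩
  · calc isometryDefect v * isometryDefect v
        = -(isometryDefect v * v + isometryDefect v * star v
          + isometryDefect v * v * star v) := by
          conv_lhs => rw [isometryDefect.eq_def v, mul_neg, ← isometryDefect.eq_def v]
          noncomm_ring
      _ = isometryDefect v := by rw [hmul]; noncomm_ring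
  · simp only [isometryDefect, IsSelfAdjoint, star_neg, star_add, star_mul, star_star,
      add_comm (star v)]

theorem star_isometryDefect_mul_mul_self {v : R} (hv : v + star v + star v * v = 0) (t : R) :
    star (isometryDefect v * t) * (isometryDefect v * t)
      = star t * t - star (t + star v * t) * (t + star v * t) := by
  have hp := isStarProjection_isometryDefect hv
  calc star (isometryDefect v * t) * (isometryDefect v * t)
      = star t * (isometryDefect v * isometryDefect v) * t := by
        rw [star_mul, hp.isSelfAdjoint.star_eq]; simp only [mul_assoc]
    _ = star t * t - star (t + star v * t) * (t + star v * t) := by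
        rw [hp.isIdempotentElem.eq]
        simp only [isometryDefect, star_add, star_mul, star_star]
        noncomm_ring

-- With `f = √(1 - (1 - s)²)` the isometry is `1 + v = S f + (1 - s)`.
theorem add_star_add_star_mul_self_eq_zero {f s S : R} (hf : IsSelfAdjoint f)
    (hs : IsSelfAdjoint s) (hff : f * f = s + s - s * s) (hsS : s * S = S)
    (hSf : star S * S * f = f) :
    (S * f - s) + star (S * f - s) + star (S * f - s) * (S * f - s) = 0 := by
  have hSs : star S * s = star S := by rw [← hs.star_eq, ← star_mul, hsS]
  calc (S * f - s) + star (S * f - s) + star (S * f - s) * (S * f - s)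
      = f * (star S * S * f) - (s + s - s * s) + (S - s * S) * f + f * (star S - star S * s) := by
        simp only [star_sub, star_mul, hf.star_eq, hs.star_eq]
        noncomm_ring
    _ = 0 := by rw [hSf, hff, hsS, hSs]; simp

end IsometryDefect

section ExactCopy

variable {B : Type*} [NonUnitalCStarAlgebra B]

theorem exists_quasi_inverse_of_norm_lt_one {x : B} (hx : ‖x‖ < 1) :
    ∃ y, y = x + x * y ∧ y = x + y * x := by
  have hunit : IsUnit (1 + ((-x : B) : Unitization ℂ B)) := by
    rw [Unitization.inr_neg, ← sub_eq_add_neg]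
    exact (Units.oneSub (x : Unitization ℂ B) (by rwa [Unitization.norm_inr])).isUnit
  obtain ⟨y, hxy, hyx⟩ := isQuasiregular_iff.1
    ((Unitization.isQuasiregular_inr_iff (R := ℂ) (-x)).1 (isQuasiregular_iff_isUnit.2 hunit))
  refine ⟨y, sub_eq_zero.1 (Eq.trans ?_ hxy), sub_eq_zero.1 (Eq.trans ?_ hyx)⟩ <;>
    noncomm_ring

variable [PartialOrder B] [StarOrderedRing B]

theorem mul_sqrt_eq_self {a u : B} (ha : 0 ≤ a) (hua : u * a = a) :
    u * CFC.sqrt a = CFC.sqrt a := by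
  have hsa : star (CFC.sqrt a) = CFC.sqrt a := (CFC.sqrt_nonneg a).isSelfAdjoint.star_eq
  refine sub_eq_zero.1 ((CStarRing.mul_star_self_eq_zero_iff _).1 ?_)
  calc (u * CFC.sqrt a - CFC.sqrt a) * star (u * CFC.sqrt a - CFC.sqrt a)
      = (u * (CFC.sqrt a * CFC.sqrt a) - CFC.sqrt a * CFC.sqrt a) * star u
        - (u * (CFC.sqrt a * CFC.sqrt a) - CFC.sqrt a * CFC.sqrt a) := by
        rw [star_sub, star_mul, hsa]; noncomm_ring
    _ = 0 := by rw [CFC.sqrt_mul_sqrt_self a, hua]; simp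

theorem norm_mul_sqrt_mul_star_self (t y : B) :
    ‖t * CFC.sqrt (y * star y)‖ = ‖t * y‖ := by
  have hsa : star (CFC.sqrt (y * star y)) = CFC.sqrt (y * star y) :=
    (CFC.sqrt_nonneg _).isSelfAdjoint.star_eq
  have hsq : (t * CFC.sqrt (y * star y)) * star (t * CFC.sqrt (y * star y))
      = (t * y) * star (t * y) := by
    calc (t * CFC.sqrt (y * star y)) * star (t * CFC.sqrt (y * star y))
        = t * (CFC.sqrt (y * star y) * CFC.sqrt (y * star y)) * star t := by
          rw [star_mul, hsa]; noncomm_ring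
      _ = (t * y) * star (t * y) := by
          rw [CFC.sqrt_mul_sqrt_self _ (mul_star_self_nonneg y), star_mul]; noncomm_ring
  refine (mul_self_inj (norm_nonneg _) (norm_nonneg _)).1 ?_
  rw [← CStarRing.norm_self_mul_star, hsq, CStarRing.norm_self_mul_star]

/- If `y = l (1 - x*)⁻¹` with `x = e - l* s`, then `y* s q = q`; replacing `y*` by `|y*| = √(y y*)`
keeps the Gram element and moves the copy of `q` under every left unit of `l`. -/
theorem exists_star_mul_self_eq_of_norm_sub_le {l s e q : B} (h : ‖star l * s - e‖ ≤ 1 / 2)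
    (heq : e * q = q) :
    ∃ z, star z * z = star q * q ∧ (∀ t, ‖t * z‖ ≤ 2 * ‖t * l‖ * ‖s * q‖) ∧
      ∀ u, u * l = l → u * z = z := by
  obtain ⟨x, hx⟩ : ∃ x, x = e - star l * s := ⟨_, rfl⟩
  have hx_norm : ‖star x‖ ≤ 1 / 2 := by rwa [norm_star, hx, norm_sub_rev]
  obtain ⟨w, hxw, hwx⟩ := exists_quasi_inverse_of_norm_lt_one (hx_norm.trans_lt one_half_lt_one)
  obtain ⟨y, hy⟩ : ∃ y, y = l + l * w := ⟨_, rfl⟩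
  have hyx : y = l + y * star x := by
    calc y = l + l * (star x + w * star x) := by rw [← hwx, hy]
      _ = l + y * star x := by rw [hy]; noncomm_ring
  have hy_norm (t : B) : ‖t * y‖ ≤ 2 * ‖t * l‖ := by
    have : ‖t * y‖ ≤ ‖t * l‖ + ‖t * y‖ * (1 / 2) := by
      calc ‖t * y‖ = ‖t * l + t * y * star x‖ := by
            conv_lhs => rw [hyx, mul_add, ← mul_assoc]
        _ ≤ ‖t * l‖ + ‖t * y‖ * ‖star x‖ :=
            (norm_add_le _ _).trans (by gcongr; exact norm_mul_le _ _)
        _ ≤ ‖t * l‖ + ‖t * y‖ * (1 / 2) := by gcongr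
    linarith
  have hysq : star y * (s * q) = q := by
    have hw_star : star w = x + star w * x := by
      conv_lhs => rw [hxw, star_add, star_mul, star_star]
    calc star y * (s * q) = (star l * s) * q + star w * ((star l * s) * q) := by
          rw [hy, star_add, star_mul]; noncomm_ring
      _ = e * q - x * q + star w * (e * q - x * q) := by
          rw [← sub_mul, hx, sub_sub_cancel]
      _ = q + (star w - (x + star w * x)) * q := by rw [heq]; noncomm_ring
      _ = q := by rw [← hw_star, sub_self, zero_mul, add_zero]
  have hr : star (CFC.sqrt (y * star y)) = CFC.sqrt (y * star y) :=
    (CFC.sqrt_nonneg _).isSelfAdjoint.star_eq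
  refine ⟨CFC.sqrt (y * star y) * (s * q), ?_, fun t => ?_, fun u hul => ?_⟩
  · calc star (CFC.sqrt (y * star y) * (s * q)) * (CFC.sqrt (y * star y) * (s * q))
        = star (s * q) * (CFC.sqrt (y * star y) * CFC.sqrt (y * star y)) * (s * q) := by
          rw [star_mul _ (s * q), hr]; simp only [mul_assoc]
      _ = star (star y * (s * q)) * (star y * (s * q)) := by
          rw [CFC.sqrt_mul_sqrt_self _ (mul_star_self_nonneg y), star_mul (star y), star_star]
          simp only [mul_assoc]
      _ = star q * q := by rw [hysq]
  · calc ‖t * (CFC.sqrt (y * star y) * (s * q))‖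
        ≤ ‖t * CFC.sqrt (y * star y)‖ * ‖s * q‖ := by rw [← mul_assoc]; exact norm_mul_le _ _
      _ ≤ 2 * ‖t * l‖ * ‖s * q‖ := by rw [norm_mul_sqrt_mul_star_self]; gcongr; exact hy_norm t
  · have huy : u * y = y := by rw [hy, mul_add, ← mul_assoc, hul]
    rw [← mul_assoc, mul_sqrt_eq_self (mul_star_self_nonneg y) (by rw [← mul_assoc, huy])]

theorem exists_pair_star_mul_self_eq {l₁ s₁ l₂ s₂ e q : B} (h₁ : ‖star l₁ * s₁ - e‖ ≤ 1 / 2)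
    (h₂ : ‖star l₂ * s₂ - e‖ ≤ 1 / 2) (heq : e * q = q) :
    ∃ S T, star S * S = star q * q ∧ star T * T = star q * q ∧
      ‖star S * T‖ ≤ 2 * (2 * ‖star l₂ * l₁‖ * ‖s₁ * q‖) * ‖s₂ * q‖ ∧
      ∀ u, u * l₁ = l₁ → u * l₂ = l₂ → u * S = S ∧ u * T = T := by
  obtain ⟨S, hSS, hS_norm, hS_unit⟩ := exists_star_mul_self_eq_of_norm_sub_le h₁ heq
  obtain ⟨T, hTT, hT_norm, hT_unit⟩ := exists_star_mul_self_eq_of_norm_sub_le h₂ heq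
  refine ⟨S, T, hSS, hTT, ?_, fun u hu₁ hu₂ => ⟨hS_unit u hu₁, hT_unit u hu₂⟩⟩
  calc ‖star S * T‖ ≤ 2 * ‖star S * l₂‖ * ‖s₂ * q‖ := hT_norm _
    _ = 2 * ‖star l₂ * S‖ * ‖s₂ * q‖ := by rw [← norm_star, star_mul, star_star]
    _ ≤ 2 * (2 * ‖star l₂ * l₁‖ * ‖s₁ * q‖) * ‖s₂ * q‖ := by gcongr; exact hS_norm _

end ExactCopy

section AlmostOrthogonalCopies

variable {B : Type*} [NonUnitalCStarAlgebra B]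

theorem cuntzLE₂_diagonal_iff {a : B} :
    CuntzLE₂ (Matrix.diagonal ![a, a]) (Matrix.diagonal ![a, 0]) ↔
      ∃ x y : ℕ → B, Tendsto (fun n => star (x n) * a * x n) atTop (𝓝 a) ∧
        Tendsto (fun n => star (y n) * a * y n) atTop (𝓝 a) ∧
        Tendsto (fun n => star (x n) * a * y n) atTop (𝓝 0) ∧
        Tendsto (fun n => star (y n) * a * x n) atTop (𝓝 0) := by
  have hentry (w : Matrix (Fin 2) (Fin 2) B) (i j : Fin 2) :
      (star w * Matrix.diagonal ![a, 0] * w) i j = star (w 0 i) * a * w 0 j := by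
    simp [Matrix.mul_apply, Matrix.star_apply, Matrix.diagonal]
  constructor
  · rintro ⟨w, hw⟩
    have hlim (i j : Fin 2) := tendsto_pi_nhds.1 (tendsto_pi_nhds.1 hw i) j
    simp only [hentry] at hlim
    exact ⟨fun n => w n 0 0, fun n => w n 0 1, by simpa using hlim 0 0, by simpa using hlim 1 1,
      by simpa using hlim 0 1, by simpa using hlim 1 0⟩
  · rintro ⟨x, y, hxx, hyy, hxy, hyx⟩
    refine ⟨fun n => !![x n, y n; 0, 0], tendsto_pi_nhds.2 fun i => tendsto_pi_nhds.2 fun j => ?_⟩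
    simp only [hentry]
    fin_cases i <;> fin_cases j <;> simpa

/-- Below the left unit `u` there are pairs of exact copies `S`, `T` of `a` (that is,
`S* S = T* T = a`) whose ranges are as close to orthogonal as desired. -/
def AlmostOrthogonalCopies (u a : B) : Prop :=
  ∀ η : ℝ, 0 < η → ∃ S T : B, u * S = S ∧ u * T = T ∧ star S * S = a ∧ star T * T = a ∧
    ‖star S * T‖ ≤ η

theorem AlmostOrthogonalCopies.map {a u v z : B} (h : AlmostOrthogonalCopies u a)
    (hu : IsSelfAdjoint u) (hz : star z * z = u * u) (hvz : v * z = z) :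
    AlmostOrthogonalCopies v a := by
  intro η hη
  obtain ⟨S, T, huS, huT, hSS, hTT, hST⟩ := h η hη
  have hgram {x y : B} (hx : u * x = x) (hy : u * y = y) :
      star (z * x) * (z * y) = star x * y := by
    calc star (z * x) * (z * y) = star x * (star z * z) * y := by
          simp only [star_mul, mul_assoc]
      _ = star (u * x) * (u * y) := by
          rw [hz, star_mul, hu.star_eq]; simp only [mul_assoc]
      _ = star x * y := by rw [hx, hy]
  exact ⟨z * S, z * T, by rw [← mul_assoc, hvz], by rw [← mul_assoc, hvz],
    by rw [hgram huS huS, hSS], by rw [hgram huT huT, hTT], by rwa [hgram huS huT]⟩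

variable [PartialOrder B] [StarOrderedRing B]

theorem AlmostOrthogonalCopies.properlyInfinite {p : B} (h : AlmostOrthogonalCopies p p)
    (hp : IsStarProjection p) (hp0 : p ≠ 0) : ProperlyInfinite p := by
  choose x y hpx hpy hxx hyy hxy using fun n : ℕ => h (1 / ((n : ℝ) + 1)) (by positivity)
  have hlim : Tendsto (fun n => star (x n) * y n) atTop (𝓝 0) :=
    squeeze_zero_norm hxy tendsto_one_div_add_atTop_nhds_zero_nat
  refine ⟨hp0, hp.nonneg, cuntzLE₂_diagonal_iff.2 ⟨x, y, ?_⟩⟩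
  simp only [mul_assoc, hpx, hpy, hxx, hyy]
  exact ⟨tendsto_const_nhds, tendsto_const_nhds, hlim, by simpa using hlim.star⟩

namespace ProperlyInfinite

variable {c : B}

theorem ne_zero (hc : ProperlyInfinite c) : c ≠ 0 := hc.1

theorem nonneg (hc : ProperlyInfinite c) : 0 ≤ c := hc.2.1

-- The cross terms of `(x l₁ + y l₂)* c (x s₁ + y s₂)` vanish in the limit.
theorem add_mem_closure_range (hc : ProperlyInfinite c) (l₁ s₁ l₂ s₂ : B) :
    star l₁ * c * s₁ + star l₂ * c * s₂ ∈
      closure (Set.range fun z : B × B => star z.1 * c * z.2) := by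
  obtain ⟨x, y, hxx, hyy, hxy, hyx⟩ := cuntzLE₂_diagonal_iff.1 hc.2.2
  have conj {f : ℕ → B} {m : B} (hf : Tendsto f atTop (𝓝 m)) (l s : B) :
      Tendsto (fun n => star l * f n * s) atTop (𝓝 (star l * m * s)) :=
    (hf.const_mul _).mul_const _
  have hlim := ((conj hxx l₁ s₁).add (conj hyy l₂ s₂)).add
    ((conj hxy l₁ s₂).add (conj hyx l₂ s₁))
  simp only [mul_zero, zero_mul, add_zero] at hlim
  refine mem_closure_of_tendsto hlim (Eventually.of_forall fun n =>
    ⟨(x n * l₁ + y n * l₂, x n * s₁ + y n * s₂), ?_⟩)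
  simp only [star_add, star_mul]
  noncomm_ring

theorem closedIdealGen_subset_closure_range (hc : ProperlyInfinite c) :
    closedIdealGen c ⊆ closure (Set.range fun z : B × B => star z.1 * c * z.2) := by
  refine closedIdealGen_subset ⟨isClosed_closure, subset_closure ⟨(0, 0), by simp⟩,
    fun m₁ h₁ m₂ h₂ => ?_, fun m hm => ?_, fun a m hm => ⟨?_, ?_⟩⟩ ?_
  · rw [← closure_closure]
    refine map_mem_closure₂ continuous_add h₁ h₂ ?_
    rintro _ ⟨⟨l₁, s₁⟩, rfl⟩ _ ⟨⟨l₂, s₂⟩, rfl⟩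
    exact hc.add_mem_closure_range l₁ s₁ l₂ s₂
  · refine map_mem_closure continuous_neg hm ?_
    rintro _ ⟨⟨l, s⟩, rfl⟩
    exact ⟨(l, -s), by simp⟩
  · refine map_mem_closure (continuous_const_mul a) hm ?_
    rintro _ ⟨⟨l, s⟩, rfl⟩
    exact ⟨(l * star a, s), by simp [mul_assoc]⟩
  · refine map_mem_closure (f := (· * a)) (continuous_mul_const a) hm ?_
    rintro _ ⟨⟨l, s⟩, rfl⟩
    exact ⟨(l, s * a), by simp [mul_assoc]⟩
  · obtain ⟨x, -, hxx, -⟩ := cuntzLE₂_diagonal_iff.1 hc.2.2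
    exact mem_closure_of_tendsto hxx (Eventually.of_forall fun n => ⟨(x n, x n), rfl⟩)

theorem exists_seq_star_mul_self_tendsto {u : B} (hc : ProperlyInfinite c) (huc : u * c = c) :
    ∃ x y : ℕ → B, (∀ n, u * x n = x n) ∧ (∀ n, u * y n = y n) ∧
      Tendsto (fun n => star (x n) * x n) atTop (𝓝 c) ∧
      Tendsto (fun n => star (y n) * y n) atTop (𝓝 c) ∧
      Tendsto (fun n => star (y n) * x n) atTop (𝓝 0) := by
  obtain ⟨x, y, hxx, hyy, -, hyx⟩ := cuntzLE₂_diagonal_iff.1 hc.2.2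
  have hgram (v w : B) : star (CFC.sqrt c * v) * (CFC.sqrt c * w) = star v * c * w := by
    conv_rhs => rw [← CFC.sqrt_mul_sqrt_self c hc.nonneg]
    simp only [star_mul, (CFC.sqrt_nonneg c).isSelfAdjoint.star_eq, mul_assoc]
  have hunit (v : B) : u * (CFC.sqrt c * v) = CFC.sqrt c * v := by
    rw [← mul_assoc, mul_sqrt_eq_self hc.nonneg huc]
  refine ⟨fun n => CFC.sqrt c * x n, fun n => CFC.sqrt c * y n, fun n => hunit _,
    fun n => hunit _, ?_⟩
  simp only [hgram]
  exact ⟨hxx, hyy, hyx⟩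

theorem almostOrthogonalCopies {e q u : B} (hc : ProperlyInfinite c)
    (he : e ∈ closedIdealGen c) (heq : e * q = q) (huc : u * c = c) :
    AlmostOrthogonalCopies u (star q * q) := by
  intro η hη
  obtain ⟨_, ⟨⟨l, s⟩, rfl⟩, hls⟩ :=
    Metric.mem_closure_iff.1 (hc.closedIdealGen_subset_closure_range he) (1 / 2) one_half_pos
  rw [dist_comm, dist_eq_norm] at hls
  obtain ⟨x, y, hux, huy, hxx, hyy, hyx⟩ := hc.exists_seq_star_mul_self_tendsto huc
  have hgram {v w : ℕ → B} {m : B} (h : Tendsto (fun n => star (v n) * w n) atTop (𝓝 m))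
      (a b : B) : Tendsto (fun n => star (v n * a) * (w n * b)) atTop (𝓝 (star a * m * b)) :=
    ((h.const_mul (star a)).mul_const b).congr fun n => by simp only [star_mul, mul_assoc]
  have hclose {v : ℕ → B} (h : Tendsto (fun n => star (v n) * v n) atTop (𝓝 c)) :
      ∀ᶠ n in atTop, ‖star (v n * l) * (v n * s) - e‖ ≤ 1 / 2 :=
    (((hgram h l s).sub_const e).norm.eventually_lt_const hls).mono fun _ => le_of_lt
  have hnorm {v : ℕ → B} (h : Tendsto (fun n => star (v n) * v n) atTop (𝓝 c)) :
      Tendsto (fun n => ‖v n * s * q‖) atTop (𝓝 √‖star (s * q) * c * (s * q)‖) :=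
    (hgram h (s * q) (s * q)).norm.sqrt.congr fun n => by
      rw [CStarRing.norm_star_mul_self, Real.sqrt_mul_self (norm_nonneg _), mul_assoc]
  have hsmall : Tendsto (fun n => 2 * (2 * ‖star (y n * l) * (x n * l)‖ * ‖x n * s * q‖)
      * ‖y n * s * q‖) atTop (𝓝 0) := by
    simpa using
      ((((hgram hyx l l).norm.const_mul 2).mul (hnorm hxx)).const_mul 2).mul (hnorm hyy)
  obtain ⟨n, hxn, hyn, hn⟩ :=
    ((hclose hxx).and ((hclose hyy).and (hsmall.eventually_le_const hη))).exists
  obtain ⟨S, T, hSS, hTT, hST, hunit⟩ := exists_pair_star_mul_self_eq hxn hyn heq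
  obtain ⟨huS, huT⟩ := hunit u (by rw [← mul_assoc, hux]) (by rw [← mul_assoc, huy])
  exact ⟨S, T, huS, huT, hSS, hTT, hST.trans hn⟩

end ProperlyInfinite

end AlmostOrthogonalCopies

section Cutoff

/-- The continuous piecewise linear function that vanishes for `k * t ≤ 1` and equals `1` for
`2 ≤ k * t`. -/
def ramp (k t : ℝ) : ℝ :=
  max 0 (min 1 (k * t - 1))

theorem continuous_ramp (k : ℝ) : Continuous (ramp k) := by
  unfold ramp; fun_prop

theorem ramp_of_le {k t : ℝ} (h : k * t ≤ 1) : ramp k t = 0 :=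
  max_eq_left ((min_le_right _ _).trans (by linarith))

theorem ramp_of_ge {k t : ℝ} (h : 2 ≤ k * t) : ramp k t = 1 := by
  rw [ramp, min_eq_left (by linarith), max_eq_right zero_le_one]

theorem ramp_zero (k : ℝ) : ramp k 0 = 0 :=
  ramp_of_le (by simp)

theorem ramp_nonneg (k t : ℝ) : 0 ≤ ramp k t :=
  le_max_left _ _

theorem ramp_le_one (k t : ℝ) : ramp k t ≤ 1 :=
  max_le zero_le_one (min_le_left _ _)

/-- A chain of local units: `e` is a unit for `q`, `q` for `f` and `s`, and `s` for `u`, where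
`f = √(1 - (1 - s)²)`. -/
structure IsCutoffChain {R : Type*} [NonUnitalRing R] [StarRing R] (e q f s u : R) : Prop where
  selfAdjoint_q : IsSelfAdjoint q
  selfAdjoint_f : IsSelfAdjoint f
  selfAdjoint_s : IsSelfAdjoint s
  selfAdjoint_u : IsSelfAdjoint u
  e_mul_q : e * q = q
  q_mul_f : q * f = f
  q_mul_s : q * s = s
  s_mul_u : s * u = u
  f_mul_f : f * f = s + s - s * s

theorem IsCutoffChain.q_mul_u {R : Type*} [NonUnitalRing R] [StarRing R] {e q f s u : R}
    (h : IsCutoffChain e q f s u) : q * u = u := by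
  rw [← h.s_mul_u, ← mul_assoc, h.q_mul_s]

variable {B : Type*} [NonUnitalCStarAlgebra B]

theorem cfcₙ_ramp_mul {a : B} {k : ℝ} {g : ℝ → ℝ} (hg : Continuous g)
    (hg_zero : ∀ t, k * t < 2 → g t = 0) : cfcₙ (ramp k) a * cfcₙ g a = cfcₙ g a := by
  rw [← cfcₙ_mul _ _ a (continuous_ramp k).continuousOn (ramp_zero k) hg.continuousOn
    (hg_zero 0 (by simp))]
  congr 1
  funext t
  rcases lt_or_ge (k * t) 2 with h | h
  · rw [hg_zero t h, mul_zero]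
  · rw [ramp_of_ge h, one_mul]

-- The local unit is `t ↦ (t / max t δ)²`, written as a multiple of `t`.
theorem exists_mem_closedIdealGen_mul_cfcₙ_eq {a : B} (ha : IsSelfAdjoint a) {δ : ℝ}
    (hδ : 0 < δ) : ∃ e ∈ closedIdealGen a,
      ∀ g : ℝ → ℝ, Continuous g → (∀ t ≤ δ, g t = 0) → e * cfcₙ g a = cfcₙ g a := by
  have hcont : Continuous fun t : ℝ => t / max t δ ^ 2 :=
    continuous_id.div (by fun_prop) fun t => (pow_pos (lt_max_of_lt_right hδ) 2).ne'
  refine ⟨a * cfcₙ (fun t : ℝ => t / max t δ ^ 2) a,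
    (isClosedTwoSidedIdeal_closedIdealGen a).mul_mem_right _ (mem_closedIdealGen_self a),
    fun g hg hg_zero => ?_⟩
  have hg0 := hg_zero 0 hδ.le
  nth_rewrite 1 [← cfcₙ_id' ℝ a]
  rw [mul_assoc, ← cfcₙ_mul _ g a hcont.continuousOn (by simp) hg.continuousOn hg0,
    ← cfcₙ_mul (fun t => t) (fun t => t / max t δ ^ 2 * g t) a continuous_id'.continuousOn rfl
      (hcont.mul hg).continuousOn (by simp)]
  congr 1
  funext t
  rcases le_or_gt t δ with h | h
  · simp only [hg_zero t h, mul_zero]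
  · have : t ≠ 0 := (hδ.trans h).ne'
    rw [max_eq_left h.le]
    field_simp

theorem cfcₙ_max_mul_eq_self {a c : B} (ha : IsSelfAdjoint a) (hac : a * c = c) :
    cfcₙ (fun t : ℝ => max (2 * t - 1) 0) a * c = c := by
  -- With `m t = (max (1 - t) (1/2))⁻¹` one has `max (2 t - 1) 0 = 1 - m t * (1 - t)`.
  have hm : Continuous fun t : ℝ => (max (1 - t) (1 / 2))⁻¹ :=
    Continuous.inv₀ (by fun_prop) fun t => (lt_max_of_lt_right one_half_pos).ne'
  obtain ⟨g, hg⟩ : ∃ g : ℝ → ℝ, g = fun t => 1 - (max (1 - t) (1 / 2))⁻¹ := ⟨_, rfl⟩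
  have hg_cont : Continuous g := hg ▸ continuous_const.sub hm
  have hg0 : g 0 = 0 := by rw [hg]; norm_num
  have hdecomp : (fun t : ℝ => max (2 * t - 1) 0) = fun t => t + (g t - g t * t) := by
    funext t
    simp only [hg]
    rcases le_total t (1 / 2) with h | h
    · have : 1 - t ≠ 0 := by linarith
      rw [max_eq_right (by linarith), max_eq_left (by linarith)]
      field_simp
      ring
    · rw [max_eq_left (by linarith), max_eq_right (by linarith)]
      ring
  have hcfc : cfcₙ (fun t : ℝ => max (2 * t - 1) 0) a = a + (cfcₙ g a - cfcₙ g a * a) := by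
    rw [hdecomp, cfcₙ_add (fun t => t) (fun t => g t - g t * t) a continuousOn_id rfl
      (by fun_prop) (by simp [hg0]), cfcₙ_sub g (fun t => g t * t) a hg_cont.continuousOn hg0
      (by fun_prop) (by simp), cfcₙ_mul g (fun t => t) a hg_cont.continuousOn hg0
      continuousOn_id rfl, cfcₙ_id' ℝ a]
  rw [hcfc, add_mul, sub_mul, mul_assoc, hac, sub_self, add_zero]

theorem exists_isCutoffChain {h : B} (hh : IsSelfAdjoint h) :
    ∃ e ∈ closedIdealGen h, ∃ q f s u : B, IsCutoffChain e q f s u ∧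
      ∀ c, h * c = c → u * c = c := by
  obtain ⟨e, he, he_unit⟩ := exists_mem_closedIdealGen_mul_cfcₙ_eq hh (δ := 1 / 8) (by norm_num)
  have hramp := continuous_ramp 4
  have hs_zero {t : ℝ} (ht : 8 * t < 2) : ramp 4 t = 0 := ramp_of_le (by linarith)
  have hf : Continuous fun t => √(ramp 4 t + ramp 4 t - ramp 4 t * ramp 4 t) := by fun_prop
  have hf0 : √(ramp 4 0 + ramp 4 0 - ramp 4 0 * ramp 4 0) = 0 := by simp [ramp_zero]
  refine ⟨e, he, cfcₙ (ramp 8) h,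
    cfcₙ (fun t => √(ramp 4 t + ramp 4 t - ramp 4 t * ramp 4 t)) h, cfcₙ (ramp 4) h,
    cfcₙ (fun t : ℝ => max (2 * t - 1) 0) h,
    ⟨cfcₙ_predicate _ h, cfcₙ_predicate _ h, cfcₙ_predicate _ h, cfcₙ_predicate _ h,
      he_unit _ (continuous_ramp 8) fun t ht => ramp_of_le (by linarith),
      cfcₙ_ramp_mul hf fun t ht => by simp [hs_zero ht],
      cfcₙ_ramp_mul hramp fun t ht => hs_zero ht,
      cfcₙ_ramp_mul (by fun_prop) fun t ht => max_eq_right (by linarith), ?_⟩,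
    fun c => cfcₙ_max_mul_eq_self hh⟩
  have hs := hramp.continuousOn (s := quasispectrum ℝ h)
  have hs0 := ramp_zero 4
  rw [← cfcₙ_mul _ _ h hf.continuousOn hf0 hf.continuousOn hf0, ← cfcₙ_add _ _ h hs hs0 hs hs0,
    ← cfcₙ_mul _ _ h hs hs0 hs hs0,
    ← cfcₙ_sub (fun t => ramp 4 t + ramp 4 t) (fun t => ramp 4 t * ramp 4 t) h (hs.add hs)
      (by simp [hs0]) (hs.mul hs) (by simp [hs0])]
  congr 1
  funext t
  exact Real.mul_self_sqrt (by nlinarith [ramp_nonneg 4 t, ramp_le_one 4 t])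

namespace IsCutoffChain

variable {e q f s u : B}

theorem f_mem {I : Set B} (h : IsCutoffChain e q f s u) (hI : IsClosedTwoSidedIdeal I)
    (he : e ∈ I) : f ∈ I := by
  rw [← h.q_mul_f, ← h.e_mul_q, mul_assoc]
  exact hI.mul_mem_right _ he

theorem s_mem {I : Set B} (h : IsCutoffChain e q f s u) (hI : IsClosedTwoSidedIdeal I)
    (he : e ∈ I) : s ∈ I := by
  rw [← h.q_mul_s, ← h.e_mul_q, mul_assoc]
  exact hI.mul_mem_right _ he

variable [PartialOrder B] [StarOrderedRing B]

/- The defect projection `p` of `S f + (1 - s)` satisfies `T* p T = T* T - |f S* T|²`, so it almost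
contains the second copy `T`, hence an exact copy of the smaller element `u`. -/
theorem exists_isStarProjection (h : IsCutoffChain e q f s u)
    (hcopies : AlmostOrthogonalCopies u (star q * q)) :
    ∃ S z, IsStarProjection (isometryDefect (S * f - s)) ∧ star z * z = u * u ∧
      isometryDefect (S * f - s) * z = z := by
  obtain ⟨S, T, huS, huT, hSS, hTT, hST⟩ := hcopies (1 / (2 * (‖f‖ + 1))) (by positivity)
  have s_mul {x : B} (hx : u * x = x) : s * x = x := by rw [← hx, ← mul_assoc, h.s_mul_u]
  have q_q_mul {x : B} (hx : q * x = x) : star q * q * x = x := by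
    rw [h.selfAdjoint_q.star_eq, mul_assoc, hx, hx]
  have hv := add_star_add_star_mul_self_eq_zero h.selfAdjoint_f h.selfAdjoint_s h.f_mul_f
    (s_mul huS) (hSS ▸ q_q_mul h.q_mul_f)
  have hp := isStarProjection_isometryDefect hv
  have hT : T + star (S * f - s) * T = f * (star S * T) := by
    rw [star_sub, star_mul, h.selfAdjoint_f.star_eq, h.selfAdjoint_s.star_eq, sub_mul, s_mul huT,
      add_sub_cancel, mul_assoc]
  have hsmall : ‖f * (star S * T)‖ ≤ 1 / 2 := by
    calc ‖f * (star S * T)‖ ≤ ‖f‖ * ‖star S * T‖ := norm_mul_le _ _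
      _ ≤ (‖f‖ + 1) * (1 / (2 * (‖f‖ + 1))) := by gcongr; linarith
      _ = 1 / 2 := by field_simp
  have hclose : ‖star (isometryDefect (S * f - s) * T) * (isometryDefect (S * f - s) * T)
      - star q * q‖ ≤ 1 / 2 := by
    rw [star_isometryDefect_mul_mul_self hv, hT, hTT, sub_sub_cancel_left, norm_neg,
      CStarRing.norm_star_mul_self]
    nlinarith [norm_nonneg (f * (star S * T))]
  obtain ⟨z, hzz, -, hz_unit⟩ :=
    exists_star_mul_self_eq_of_norm_sub_le hclose (q_q_mul h.q_mul_u)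
  exact ⟨S, z, hp, by rw [hzz, h.selfAdjoint_u.star_eq],
    hz_unit _ (by rw [← mul_assoc, hp.isIdempotentElem.eq])⟩

end IsCutoffChain

end Cutoff

section Main

variable {B : Type*} [NonUnitalCStarAlgebra B] {c : B}

theorem mem_closedIdealGen_of_star_mul_self_eq {p u z : B} (huc : u * c = c)
    (hzz : star z * z = u * u) (hpz : p * z = z) : c ∈ closedIdealGen p := by
  have hIp := isClosedTwoSidedIdeal_closedIdealGen p
  have hc_eq : c = star z * (p * (z * c)) := by
    rw [← mul_assoc p, hpz, ← mul_assoc, hzz, mul_assoc, huc, huc]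
  exact hc_eq ▸ hIp.mul_mem_left _ (hIp.mul_mem_right _ (mem_closedIdealGen_self p))

theorem isometryDefect_mem {I : Set B} (hI : IsClosedTwoSidedIdeal I) {v : B} (hv : v ∈ I)
    (hv_star : star v ∈ I) : isometryDefect v ∈ I :=
  hI.neg_mem (hI.add_mem (hI.add_mem hv hv_star) (hI.mul_mem_right _ hv))

variable [PartialOrder B] [StarOrderedRing B]

theorem ProperlyInfinite.of_isStarProjection_mem_closedIdealGen {p u z : B}
    (hc : ProperlyInfinite c) (hp : IsStarProjection p) (hpc : p ∈ closedIdealGen c)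
    (hu : IsSelfAdjoint u) (huc : u * c = c) (hzz : star z * z = u * u) (hpz : p * z = z) :
    ProperlyInfinite p := by
  have hp0 : p ≠ 0 := by
    rintro rfl
    refine hc.ne_zero ?_
    calc c = star z * z * c := by rw [hzz, mul_assoc, huc, huc]
      _ = 0 := by rw [← hpz]; simp
  have hcopies : AlmostOrthogonalCopies u p := by
    simpa only [hp.isSelfAdjoint.star_eq, hp.isIdempotentElem.eq] using
      hc.almostOrthogonalCopies hpc hp.isIdempotentElem.eq huc
  exact (hcopies.map hu hzz hpz).properlyInfinite hp hp0

theorem ProperlyInfinite.exists_isSelfAdjoint_mul_eq_self {h : B} (hc : ProperlyInfinite c)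
    (hI : h ∈ closedIdealGen c) (hhc : h * c = c) :
    ∃ k ∈ closedIdealGen c, IsSelfAdjoint k ∧ k * c = c := by
  have hJ := isClosedTwoSidedIdeal_closedIdealGen c
  have hcsa := hc.nonneg.isSelfAdjoint
  refine ⟨h + star h - star h * h, hJ.sub_mem (hJ.add_mem hI (star_mem_closedIdealGen hcsa hI))
    (hJ.mul_mem_left _ hI), ?_, ?_⟩
  · simp only [IsSelfAdjoint, star_sub, star_add, star_mul, star_star, add_comm (star h)]
  · rw [sub_mul, add_mul, mul_assoc, hhc, add_sub_cancel_right]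

theorem exists_full_properly_infinite_projection_general {h : B} (hc : ProperlyInfinite c)
    (hI : h ∈ closedIdealGen c) (hhc : h * c = c) :
    ∃ p : B, p ∈ closedIdealGen c ∧ p * p = p ∧ star p = p ∧ ProperlyInfinite p ∧
      closedIdealGen p = closedIdealGen c := by
  obtain ⟨k, hkI, hk, hkc⟩ := hc.exists_isSelfAdjoint_mul_eq_self hI hhc
  obtain ⟨e, hek, q, f, s, u, hchain, hu⟩ := exists_isCutoffChain hk
  have he : e ∈ closedIdealGen c := closedIdealGen_subset_closedIdealGen hkI hek
  obtain ⟨S, z, hp, hzz, hpz⟩ :=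
    hchain.exists_isStarProjection (hc.almostOrthogonalCopies he hchain.e_mul_q (hu c hkc))
  have hJ := isClosedTwoSidedIdeal_closedIdealGen c
  have hv : S * f - s ∈ closedIdealGen c :=
    hJ.sub_mem (hJ.mul_mem_left _ (hchain.f_mem hJ he)) (hchain.s_mem hJ he)
  have hp_mem : isometryDefect (S * f - s) ∈ closedIdealGen c :=
    isometryDefect_mem hJ hv (star_mem_closedIdealGen hc.nonneg.isSelfAdjoint hv)
  have hc_mem := mem_closedIdealGen_of_star_mul_self_eq (hu c hkc) hzz hpz
  exact ⟨_, hp_mem, hp.isIdempotentElem, hp.isSelfAdjoint,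
    hc.of_isStarProjection_mem_closedIdealGen hp hp_mem hchain.selfAdjoint_u (hu c hkc) hzz hpz,
    (closedIdealGen_subset_closedIdealGen hp_mem).antisymm
      (closedIdealGen_subset_closedIdealGen hc_mem)⟩

end Main

/-- If `b ≥ 0` and `(b − ε)₊` are properly infinite and generate the same closed
two-sided ideal `I` of `B`, then `I` contains a properly infinite projection which is
full in `I`. -/
theorem exists_full_properly_infinite_projection
    {B : Type*} [NonUnitalCStarAlgebra B] [PartialOrder B] [StarOrderedRing B]
    (b : B) (hb : 0 ≤ b) (ε : ℝ) (hε : 0 < ε)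
    (hbpi : ProperlyInfinite b)
    (hbepi : ProperlyInfinite (cfcₙ (fun t : ℝ => max (t - ε) 0) b))
    (I : Set B) (hIb : closedIdealGen b = I)
    (hIbe : closedIdealGen (cfcₙ (fun t : ℝ => max (t - ε) 0) b) = I) :
    ∃ p : B, p ∈ I ∧ p * p = p ∧ star p = p ∧ ProperlyInfinite p ∧
      closedIdealGen p = I := by
  subst hIbe
  obtain ⟨h, hI, h_unit⟩ := exists_mem_closedIdealGen_mul_cfcₙ_eq hb.isSelfAdjoint hε
  exact exists_full_properly_infinite_projection_general hbepi (hIb ▸ hI)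
    (h_unit _ (by fun_prop) fun t ht => max_eq_right (by linarith))
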